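/- Let γ=(B,M,S,A,Â) be a market with middlemen and γ*=(B,S,A*) the associated two-sided assignment market. For every coalition R⊆B∪S of buyers and sellers, w_{γ*}(R) = v_γ(R∪M); that is, the worth of R in the assignment game γ* equals the worth, in the middlemen market game, of the coalition consisting of R together with all middlemen. -/

import Mathlib

/-!
Matching markets with middlemen (Atay, Bahel, Solymosi).

Players are of three sorts: buyers `B`, middlemen `M`, sellers `S`
(three disjoint nonempty finite types); the player set is `Player B M S = B ⊕ M ⊕ S`.
An (functional representation of a) `T`-matching assigns to each buyer either nothing
(the buyer is single), a seller (direct trade), or a middleman together with a seller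
(mediated trade); distinct buyers get distinct sellers, and all agents involved lie in `T`.
A middleman may mediate several trades.
-/

open scoped Classical

noncomputable section

/-- The set of players of a market with middlemen: buyers `B`, middlemen `M`, sellers `S`. -/
abbrev Player (B M S : Type*) := B ⊕ M ⊕ S

/-- Functional representation of a matching in the market with middlemen: each buyer is
unmatched (`none`), matched directly to a seller (`some (none, k)`), or matched to a seller
through a middleman (`some (some j, k)`). -/
abbrev MMatch (B M S : Type*) := B → Option (Option M × S)

namespace Middlemen

variable {B M S : Type*}

/-- A buyer as a player. -/
def buyer (i : B) : Player B M S := Sum.inl i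

/-- A middleman as a player. -/
def mid (j : M) : Player B M S := Sum.inr (Sum.inl j)

/-- A seller as a player. -/
def seller (k : S) : Player B M S := Sum.inr (Sum.inr k)

/-- `f` is a `T`-matching in the market with middlemen: every basic coalition used by `f`
is contained in `T` and no seller is matched to two distinct buyers.  (Buyers, middlemen
and sellers of `T` not appearing in any trade are singletons of the matching.) -/
def IsMatching (T : Finset (Player B M S)) (f : MMatch B M S) : Prop :=
  (∀ i o k, f i = some (o, k) →
      buyer i ∈ T ∧ seller k ∈ T ∧ ∀ j, o = some j → mid j ∈ T) ∧
  (∀ i i' o o' k, f i = some (o, k) → f i' = some (o', k) → i = i')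

variable [Fintype B] [Fintype M] [Fintype S]

/-- The value `Σ_{(i,k)∈μ} a_{ik} + Σ_{(i,j,k)∈μ} â_{ijk}` of a matching in the market
with middlemen with direct-trade surplus matrix `A` and mediated-trade surpluses `Ah`. -/
def mval (A : B → S → ℝ) (Ah : B → M → S → ℝ) (f : MMatch B M S) : ℝ :=
  ∑ i, (match f i with
    | none => 0
    | some (none, k) => A i k
    | some (some j, k) => Ah i j k)

/-- The TU game `v_γ` associated with the market with middlemen `γ = (B,M,S,A,Ah)`:
the worth of a coalition `T` is the maximal value of a `T`-matching. -/
def vGame (A : B → S → ℝ) (Ah : B → M → S → ℝ) (T : Finset (Player B M S)) : ℝ :=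
  sSup { r | ∃ f : MMatch B M S, IsMatching T f ∧ r = mval A Ah f }

/-- `g` is a matching of the coalition `R` in a two-sided assignment market. -/
def IsMatching2 (R : Finset (B ⊕ S)) (g : B → Option S) : Prop :=
  (∀ i k, g i = some k → Sum.inl i ∈ R ∧ Sum.inr k ∈ R) ∧
  (∀ i i' k, g i = some k → g i' = some k → i = i')

/-- The value of a two-sided matching with valuation matrix `As`. -/
def m2val (As : B → S → ℝ) (g : B → Option S) : ℝ :=
  ∑ i, (match g i with
    | none => 0
    | some k => As i k)

/-- The assignment game `w_{γ*}` of the two-sided assignment market `(B,S,As)`. -/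
def wGame (As : B → S → ℝ) (R : Finset (B ⊕ S)) : ℝ :=
  sSup { r | ∃ g : B → Option S, IsMatching2 R g ∧ r = m2val As g }

/-- The matrix `A*` of the associated two-sided assignment market:
`a*_{ik} = max_{j ∈ M} â_{ijk}`. -/
def Astar [Nonempty M] (Ah : B → M → S → ℝ) (i : B) (k : S) : ℝ :=
  Finset.univ.sup' Finset.univ_nonempty fun j => Ah i j k

/-- The two-sided matching `μ*` induced by a matching `μ` of the market with middlemen:
keep all matched buyer–seller pairs (dropping the middlemen). -/
def star (f : MMatch B M S) : B → Option S := fun i => (f i).map Prod.snd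

/-- `m(i,k)`: the lowest-indexed middleman `j` maximizing `â_{ijk}`. -/
def bestMid [Nonempty M] [LinearOrder M] (Ah : B → M → S → ℝ) (i : B) (k : S) : M :=
  (Finset.univ.filter fun j => ∀ j' : M, Ah i j' k ≤ Ah i j k).min' (by
    obtain ⟨j, -, hj⟩ := Finset.exists_max_image (Finset.univ : Finset M)
      (fun j => Ah i j k) Finset.univ_nonempty
    exact ⟨j, Finset.mem_filter.mpr ⟨Finset.mem_univ _, fun j' => hj j' (Finset.mem_univ _)⟩⟩)

/-- The matching `σ^△` of the market with middlemen induced by a two-sided matching `σ`: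
each matched pair `{i,k}` of `σ` trades through the best middleman `m(i,k)`
(and every other middleman is a singleton). -/
def triangle [Nonempty M] [LinearOrder M] (Ah : B → M → S → ℝ) (g : B → Option S) :
    MMatch B M S :=
  fun i => (g i).map fun k => (some (bestMid Ah i k), k)

/-- The core of a TU game on the finite player set `P`. -/
def core {P : Type*} [Fintype P] (v : Finset P → ℝ) : Set (P → ℝ) :=
  { x | ∑ t, x t = v Finset.univ ∧ ∀ T : Finset P, v T ≤ ∑ t ∈ T, x t }

/-- Augment a payoff vector of the two-sided market with zero payoffs to all middlemen. -/
def aug (xz : B ⊕ S → ℝ) : Player B M S → ℝ := fun t =>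
  match t with
  | Sum.inl i => xz (Sum.inl i)
  | Sum.inr (Sum.inl _) => 0
  | Sum.inr (Sum.inr k) => xz (Sum.inr k)

/-- Restrict a payoff vector of the market with middlemen to the buyers and sellers. -/
def restrictBS (X : Player B M S → ℝ) : B ⊕ S → ℝ := fun t =>
  match t with
  | Sum.inl i => X (buyer i)
  | Sum.inr k => X (seller k)

/-- The set `T ∩ (B ∪ S)` of buyers and sellers of a coalition `T`. -/
def bsPart (T : Finset (Player B M S)) : Finset (B ⊕ S) :=
  Finset.univ.filter fun t =>
    match t with
    | Sum.inl i => buyer i ∈ T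
    | Sum.inr k => (seller k : Player B M S) ∈ T

/-- The coalition `R ∪ M` consisting of the buyers and sellers of `R` together with
all middlemen. -/
def withAllMid (R : Finset (B ⊕ S)) : Finset (Player B M S) :=
  Finset.univ.filter fun t =>
    match t with
    | Sum.inl i => Sum.inl i ∈ R
    | Sum.inr (Sum.inl _) => True
    | Sum.inr (Sum.inr k) => Sum.inr k ∈ R

end Middlemen

namespace Middlemen

/-!
Forgetting the middlemen turns a matching `μ` of the middlemen market into the two-sided matching
`μ*`, whose value for `A*` is at least as large because `A*` dominates every surplus of a trade.
Conversely, when all middlemen are present, each pair of a two-sided matching `σ` can trade through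
its best middleman, so that `σ^△` is available and has exactly the value of `σ`. Applying these two
maps to optimal matchings gives the two inequalities.
-/

theorem isGreatest_sSup_values {α β : Type*} [Finite α] [ConditionallyCompleteLinearOrder β]
    {p : α → Prop} (hp : ∃ a, p a) (val : α → β) :
    IsGreatest {r | ∃ a, p a ∧ r = val a} (sSup {r | ∃ a, p a ∧ r = val a}) := by
  have finite_values : {r | ∃ a, p a ∧ r = val a}.Finite :=
    (Set.finite_range val).subset fun _ ⟨a, _, hr⟩ => ⟨a, hr.symm⟩
  have nonempty_values : {r | ∃ a, p a ∧ r = val a}.Nonempty :=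
    hp.elim fun a ha => ⟨val a, a, ha, rfl⟩
  exact ⟨nonempty_values.csSup_mem finite_values, fun _ => le_csSup finite_values.bddAbove⟩

section

variable {B M S : Type*}

@[simp]
theorem buyer_mem_withAllMid [Fintype B] [Fintype M] [Fintype S]
    {R : Finset (B ⊕ S)} {i : B} :
    (buyer i : Player B M S) ∈ withAllMid R ↔ Sum.inl i ∈ R := by
  simp [withAllMid, buyer]

@[simp]
theorem mid_mem_withAllMid [Fintype B] [Fintype M] [Fintype S]
    {R : Finset (B ⊕ S)} {j : M} :
    (mid j : Player B M S) ∈ withAllMid R := by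
  simp [withAllMid, mid]

@[simp]
theorem seller_mem_withAllMid [Fintype B] [Fintype M] [Fintype S]
    {R : Finset (B ⊕ S)} {k : S} :
    (seller k : Player B M S) ∈ withAllMid R ↔ Sum.inr k ∈ R := by
  simp [withAllMid, seller]

@[simp]
theorem inl_mem_bsPart [Fintype B] [Fintype S] {T : Finset (Player B M S)} {i : B} :
    Sum.inl i ∈ bsPart T ↔ buyer i ∈ T := by
  simp [bsPart]

@[simp]
theorem inr_mem_bsPart [Fintype B] [Fintype S] {T : Finset (Player B M S)} {k : S} :
    Sum.inr k ∈ bsPart T ↔ seller k ∈ T := by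
  simp [bsPart]

@[simp]
theorem bsPart_withAllMid [Fintype B] [Fintype M] [Fintype S] (R : Finset (B ⊕ S)) :
    bsPart (withAllMid R : Finset (Player B M S)) = R := by
  ext (i | k) <;> simp

theorem isMatching_none (T : Finset (Player B M S)) : IsMatching T fun _ => none := by
  simp [IsMatching]

theorem isMatching2_none (R : Finset (B ⊕ S)) : IsMatching2 R fun _ => none := by
  simp [IsMatching2]

theorem isGreatest_vGame [Fintype B] [Finite M] [Finite S]
    (A : B → S → ℝ) (Ah : B → M → S → ℝ) (T : Finset (Player B M S)) :
    IsGreatest {r | ∃ f : MMatch B M S, IsMatching T f ∧ r = mval A Ah f} (vGame A Ah T) :=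
  isGreatest_sSup_values ⟨_, isMatching_none T⟩ (mval A Ah)

theorem isGreatest_wGame [Fintype B] [Finite S] (As : B → S → ℝ) (R : Finset (B ⊕ S)) :
    IsGreatest {r | ∃ g : B → Option S, IsMatching2 R g ∧ r = m2val As g} (wGame As R) :=
  isGreatest_sSup_values ⟨_, isMatching2_none R⟩ (m2val As)

theorem exists_isMatching_vGame_eq [Fintype B] [Finite M] [Finite S]
    (A : B → S → ℝ) (Ah : B → M → S → ℝ) (T : Finset (Player B M S)) :
    ∃ f : MMatch B M S, IsMatching T f ∧ vGame A Ah T = mval A Ah f :=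
  (isGreatest_vGame A Ah T).1

theorem exists_isMatching2_wGame_eq [Fintype B] [Finite S]
    (As : B → S → ℝ) (R : Finset (B ⊕ S)) :
    ∃ g : B → Option S, IsMatching2 R g ∧ wGame As R = m2val As g :=
  (isGreatest_wGame As R).1

theorem IsMatching.mval_le_vGame [Fintype B] [Finite M] [Finite S]
    {T : Finset (Player B M S)} {f : MMatch B M S}
    (hf : IsMatching T f) (A : B → S → ℝ) (Ah : B → M → S → ℝ) :
    mval A Ah f ≤ vGame A Ah T :=
  (isGreatest_vGame A Ah T).2 ⟨f, hf, rfl⟩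

theorem IsMatching2.m2val_le_wGame [Fintype B] [Finite S]
    {R : Finset (B ⊕ S)} {g : B → Option S}
    (hg : IsMatching2 R g) (As : B → S → ℝ) : m2val As g ≤ wGame As R :=
  (isGreatest_wGame As R).2 ⟨g, hg, rfl⟩

theorem le_Astar [Fintype M] [Nonempty M] (Ah : B → M → S → ℝ) (i : B) (j : M) (k : S) :
    Ah i j k ≤ Astar Ah i k :=
  Finset.le_sup' (fun j => Ah i j k) (Finset.mem_univ j)

theorem le_apply_bestMid [Fintype M] [Nonempty M] [LinearOrder M]
    (Ah : B → M → S → ℝ) (i : B) (j : M) (k : S) :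
    Ah i j k ≤ Ah i (bestMid Ah i k) k := by
  have bestMid_mem : bestMid Ah i k ∈ Finset.univ.filter fun j => ∀ j', Ah i j' k ≤ Ah i j k :=
    Finset.min'_mem _ _
  exact (Finset.mem_filter.mp bestMid_mem).2 j

theorem apply_bestMid [Fintype M] [Nonempty M] [LinearOrder M]
    (Ah : B → M → S → ℝ) (i : B) (k : S) :
    Ah i (bestMid Ah i k) k = Astar Ah i k :=
  le_antisymm (le_Astar Ah i _ k) (Finset.sup'_le _ _ fun j _ => le_apply_bestMid Ah i j k)

theorem star_eq_some_iff {f : MMatch B M S} {i : B} {k : S} :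
    star f i = some k ↔ ∃ o, f i = some (o, k) := by
  simp [star]

theorem IsMatching.isMatching2_star [Fintype B] [Fintype S]
    {T : Finset (Player B M S)} {f : MMatch B M S}
    (hf : IsMatching T f) : IsMatching2 (bsPart T) (star f) := by
  obtain ⟨trades_in_T, sellers_distinct⟩ := hf
  simp only [IsMatching2, star_eq_some_iff, inl_mem_bsPart, inr_mem_bsPart]
  refine ⟨?_, ?_⟩
  · rintro i k ⟨o, hi⟩
    obtain ⟨buyer_mem, seller_mem, -⟩ := trades_in_T i o k hi
    exact ⟨buyer_mem, seller_mem⟩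
  · rintro i i' k ⟨o, hi⟩ ⟨o', hi'⟩
    exact sellers_distinct i i' o o' k hi hi'

theorem mval_le_m2val_star [Fintype B] {A As : B → S → ℝ} {Ah : B → M → S → ℝ}
    (hA : ∀ i k, A i k ≤ As i k) (hAh : ∀ i j k, Ah i j k ≤ As i k) (f : MMatch B M S) :
    mval A Ah f ≤ m2val As (star f) := by
  refine Finset.sum_le_sum fun i _ => ?_
  rcases hi : f i with _ | ⟨_ | j, k⟩
  · simp [star, hi]
  · simpa [star, hi] using hA i k
  · simpa [star, hi] using hAh i j k

theorem vGame_le_wGame_bsPart [Fintype B] [Finite M] [Fintype S]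
    {A As : B → S → ℝ} {Ah : B → M → S → ℝ}
    (hA : ∀ i k, A i k ≤ As i k) (hAh : ∀ i j k, Ah i j k ≤ As i k)
    (T : Finset (Player B M S)) : vGame A Ah T ≤ wGame As (bsPart T) := by
  obtain ⟨f, hf, optimal⟩ := exists_isMatching_vGame_eq A Ah T
  calc
    vGame A Ah T = mval A Ah f := optimal
    _ ≤ m2val As (star f) := mval_le_m2val_star hA hAh f
    _ ≤ wGame As (bsPart T) := hf.isMatching2_star.m2val_le_wGame As

theorem triangle_eq_some_iff [Fintype M] [Nonempty M] [LinearOrder M]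
    {Ah : B → M → S → ℝ} {g : B → Option S} {i : B} {o : Option M} {k : S} :
    triangle Ah g i = some (o, k) ↔ g i = some k ∧ o = some (bestMid Ah i k) := by
  simp only [triangle, Option.map_eq_some_iff, Prod.mk.injEq]
  constructor
  · rintro ⟨_, hi, rfl, rfl⟩
    exact ⟨hi, rfl⟩
  · rintro ⟨hi, rfl⟩
    exact ⟨k, hi, rfl, rfl⟩

theorem IsMatching2.isMatching_triangle [Fintype B] [Fintype M] [Fintype S] [Nonempty M]
    [LinearOrder M] {R : Finset (B ⊕ S)} {g : B → Option S} (hg : IsMatching2 R g)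
    (Ah : B → M → S → ℝ) :
    IsMatching (withAllMid R) (triangle Ah g) := by
  obtain ⟨pairs_in_R, sellers_distinct⟩ := hg
  simp only [IsMatching, triangle_eq_some_iff, buyer_mem_withAllMid, seller_mem_withAllMid,
    mid_mem_withAllMid, implies_true, and_true]
  exact ⟨fun i _ k hi => pairs_in_R i k hi.1,
    fun i i' _ _ k hi hi' => sellers_distinct i i' k hi.1 hi'.1⟩

theorem mval_triangle [Fintype B] [Fintype M] [Nonempty M] [LinearOrder M]
    (A : B → S → ℝ) (Ah : B → M → S → ℝ) (g : B → Option S) :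
    mval A Ah (triangle Ah g) = m2val (Astar Ah) g := by
  refine Finset.sum_congr rfl fun i _ => ?_
  cases hi : g i <;> simp [triangle, hi, apply_bestMid]

theorem wGame_le_vGame_withAllMid [Fintype B] [Fintype M] [Fintype S] [Nonempty M]
    (A : B → S → ℝ) (Ah : B → M → S → ℝ) (R : Finset (B ⊕ S)) :
    wGame (Astar Ah) R ≤ vGame A Ah (withAllMid R) := by
  -- `bestMid` breaks ties by an order on `M`; any order will do.
  obtain ⟨_, -⟩ := exists_wellFoundedLT M
  obtain ⟨g, hg, optimal⟩ := exists_isMatching2_wGame_eq (Astar Ah) R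
  calc
    wGame (Astar Ah) R = m2val (Astar Ah) g := optimal
    _ = mval A Ah (triangle Ah g) := (mval_triangle A Ah g).symm
    _ ≤ vGame A Ah (withAllMid R) := (hg.isMatching_triangle Ah).mval_le_vGame A Ah

theorem wGame_eq_vGame_withAllMid_general [Fintype B] [Fintype M] [Fintype S] [Nonempty M]
    (A : B → S → ℝ) (Ah : B → M → S → ℝ) (hA : ∀ i k, A i k ≤ Astar Ah i k)
    (R : Finset (B ⊕ S)) : wGame (Astar Ah) R = vGame A Ah (withAllMid R) := by
  apply le_antisymm (wGame_le_vGame_withAllMid A Ah R)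
  simpa only [bsPart_withAllMid] using vGame_le_wGame_bsPart hA (le_Astar Ah) (withAllMid R)

end

/-- for every coalition `R` of buyers and sellers,
`w_γ*(R) = v_γ(R ∪ M)`. -/
theorem wGame_eq_vGame_withAllMid
    {B M S : Type*} [Fintype B] [Fintype M] [Fintype S]
    [Nonempty B] [Nonempty M] [Nonempty S]
    (A : B → S → ℝ) (Ah : B → M → S → ℝ)
    (hA : ∀ i k, 0 ≤ A i k) (hAh : ∀ i j k, A i k ≤ Ah i j k) :
    ∀ R : Finset (B ⊕ S), wGame (Astar Ah) R = vGame A Ah (withAllMid R) :=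
  wGame_eq_vGame_withAllMid_general A Ah fun i k =>
    (hAh i (Classical.arbitrary M) k).trans (le_Astar Ah i _ k)

end Middlemen
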